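/- For all integers m ≥ 2 and l ≥ 1, the symmetrization of the CLEX graph C(m,l) is connected and has diameter at most 2^l − 1. -/

import Mathlib

/-!
The diameter bound is proved by divide and conquer on the length of the prefix on which two vertices
may differ. If `u` and `w` agree on all (0-based) coordinates beyond `s`, where `s ≥ 1`, change
coordinate `s - 1` of `u` into `w s` inside the copy of `C(m,s)` containing `u`; the level-`s` edge
then moves this value into coordinate `s`, landing in the copy of `C(m,s)` containing `w`. Two walks
inside copies and one connecting edge give `2 * (2 ^ s - 1) + 1 = 2 ^ (s + 1) - 1`
(`clexSym_exists_walk`).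
-/

/-- The level-`t` (0-based; level `t+1` in the paper's 1-based numbering) directed
edge relation of the CLEX graph `C(m,l)` on vertex set `Fin l → Fin m`. -/
def clexEdge (m l : ℕ) (t : Fin l) (u w : Fin l → Fin m) : Prop :=
  if (t : ℕ) = 0 then
    u t ≠ w t ∧ ∀ k : Fin l, k ≠ t → u k = w k
  else
    w t = u ⟨(t : ℕ) - 1, lt_of_le_of_lt (Nat.sub_le _ _) t.isLt⟩ ∧
      ∀ k : Fin l, (k : ℕ) ≠ (t : ℕ) - 1 → k ≠ t → w k = u k

/-- The symmetrization of the CLEX graph `C(m,l)`. -/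
def clexSym (m l : ℕ) : SimpleGraph (Fin l → Fin m) :=
  SimpleGraph.fromRel (fun u w => ∃ t : Fin l, clexEdge m l t u w)

/-- Vertices agreeing on all coordinates `≥ s` lie in a common copy of `C(m,s)` (and are equal if
`s = 0`), and are joined by a walk of length at most `2 ^ s - 1`. -/
theorem clexSym_exists_walk (m l s : ℕ) (hs : s ≤ l) :
    ∀ u w : Fin l → Fin m, (∀ k : Fin l, s ≤ (k : ℕ) → u k = w k) →
      ∃ p : (clexSym m l).Walk u w, p.length + 1 ≤ 2 ^ s := by
  induction s with
  | zero =>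
    intro u w h
    obtain rfl : u = w := funext fun k => h k (Nat.zero_le _)
    exact ⟨.nil, by simp⟩
  | succ s ih =>
    intro u w h
    have ih := ih (by omega)
    have hpow : 2 ^ (s + 1) = 2 ^ s + 2 ^ s := by ring
    have hpos : 0 < 2 ^ s := by positivity
    let t : Fin l := ⟨s, hs⟩
    by_cases hut : u t = w t
    · obtain ⟨p, hp⟩ := ih u w fun k hk => by
        rcases hk.eq_or_lt with hk | hk
        · obtain rfl : k = t := Fin.ext hk.symm
          exact hut
        · exact h k hk
      exact ⟨p, by omega⟩
    rcases Nat.eq_zero_or_pos s with rfl | hs0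
    · have hadj : (clexSym m l).Adj u w := by
        refine (SimpleGraph.fromRel_adj _ _ _).2 ⟨fun e => hut (congrFun e t), Or.inl ⟨t, ?_⟩⟩
        rw [clexEdge, if_pos rfl]
        refine ⟨hut, fun k hk => h k ?_⟩
        have : (k : ℕ) ≠ 0 := fun e => hk (Fin.ext e)
        omega
      exact ⟨hadj.toWalk, by simp⟩
    · let r : Fin l := ⟨s - 1, by omega⟩
      have hrt : t ≠ r := fun e => by
        have := congrArg Fin.val e
        simp only [t, r] at this
        omega
      let u' := Function.update u r (w t)
      let w' := Function.update u t (w t)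
      have hadj : (clexSym m l).Adj u' w' := by
        refine (SimpleGraph.fromRel_adj _ _ _).2 ⟨fun e => hut ?_, Or.inl ⟨t, ?_⟩⟩
        · simpa [u', w', hrt] using congrFun e t
        · rw [clexEdge, if_neg hs0.ne']
          refine ⟨?_, fun k hk hkt => ?_⟩
          · change w' t = u' r
            simp [u', w']
          · have hkr : k ≠ r := fun e => hk (congrArg Fin.val e)
            simp [u', w', hkt, hkr]
      obtain ⟨p, hp⟩ := ih u u' fun k hk => by
        have hkr : k ≠ r := fun e => by
          have : (k : ℕ) = s - 1 := congrArg Fin.val e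
          omega
        simp [u', hkr]
      obtain ⟨q, hq⟩ := ih w' w fun k hk => by
        by_cases hkt : k = t
        · simp [w', hkt]
        · have : (k : ℕ) ≠ s := fun e => hkt (Fin.ext e)
          simpa [w', hkt] using h k (by omega)
      refine ⟨p.append (.cons hadj q), ?_⟩
      simp only [SimpleGraph.Walk.length_append, SimpleGraph.Walk.length_cons]
      omega


/-- The symmetrization of `C(m,l)` is connected and has diameter at most `2^l − 1`. -/
theorem clexSym_connected_diam_le (m l : ℕ) (hm : 2 ≤ m) (hl : 1 ≤ l) :
    (clexSym m l).Connected ∧ (clexSym m l).diam ≤ 2 ^ l - 1 := by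
  have key (u w : Fin l → Fin m) : ∃ p : (clexSym m l).Walk u w, p.length + 1 ≤ 2 ^ l :=
    clexSym_exists_walk m l l le_rfl u w fun k hk => absurd k.isLt (by omega)
  have : Nonempty (Fin l → Fin m) := ⟨fun _ => ⟨0, by omega⟩⟩
  refine ⟨⟨fun u w => (key u w).elim fun p _ => ⟨p⟩⟩, ?_⟩
  obtain ⟨u, w, huw⟩ := (clexSym m l).exists_dist_eq_diam
  obtain ⟨p, hp⟩ := key u w
  have := SimpleGraph.dist_le p
  omega
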